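/- Let K ≥ 2, n ≥ 1, N = Kn, d > K, and 0 < τ < 2(d−2)/(1 + (K mod 2)/K). Suppose (W,H) ∈ OB(d,K) × OB(d,N) is a Riemannian critical point of f that is not a global minimizer of f over OB(d,K) × OB(d,N), i.e., f(W,H) > log(1 + (K−1)·exp(−Kτ/(K−1))). Then there exists a tangent pair Δ = (Δ_W, Δ_H) at (W,H) such that Hess f(W,H)[Δ,Δ] < 0. -/

import Mathlib

/-!
Write `α`, `β` for the diagonal multipliers of the critical point. Criticality in `H` reads
`W g_j = β_j h_j`, and there are two cases.

*All `β_j ≠ 0`.* Then every `h_j` lies in the column space of `W`, so since `K < d` some `a ≠ 0` is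
orthogonal to all columns of both `W` and `H`. Along `Δ_W = a xᵀ`, `Δ_H = a yᵀ` the curvature of the
loss drops out (`ε = 0`) and the Hessian equals
`τ ‖a‖² (2 xᵀ G y - ∑ α_k x_k² - ∑ β_j y_j²)` (`hessForm_rankOne`). If this form were nonnegative for
all `x`, `y`, then summing it over the rows of an arbitrary competitor `(W', H')` would give
`2 ⟨G, W'ᵀ H'⟩ ≥ ∑ α + ∑ β = 2 ⟨G, Wᵀ H⟩`; as `f` is convex in the logits with gradient `G`, this
means `f(W', H') ≥ f(W, H)` (`ceRisk_le_of_form_nonneg`). Taking for `(W', H')` a simplex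
equiangular tight frame contradicts the assumption that `(W, H)` is not globally optimal.

*Some `β_j = 0`.* Then `w_k = ∑ η_ℓ w_ℓ` with `k` the class of `j` and all `η_ℓ > 0`, so a unit vector
is a proper convex combination of unit vectors and all `w_ℓ` coincide. Since `d ≥ 3`, there is
`v ≠ 0` orthogonal to this common vector and to `h_j`. With `Δ_W = v e_kᵀ` and `Δ_H = t v e_jᵀ` the
Hessian is affine in `t` with nonzero slope `2 τ G_{kj} ‖v‖²`, hence takes negative values.
-/

open scoped BigOperators Matrix

/-- Cross-entropy loss: `L_CE(z,k) = log (∑_ℓ exp (z_ℓ)) − z_k`. -/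
noncomputable def LCE {K : ℕ} (z : Fin K → ℝ) (k : Fin K) : ℝ :=
  Real.log (∑ ℓ, Real.exp (z ℓ)) - z k

/-- The oblique manifold: matrices all of whose columns have unit Euclidean norm. -/
def OB (p : ℕ) (ι : Type) [Fintype ι] : Set (Matrix (Fin p) ι ℝ) :=
  {M | ∀ j, ∑ i, (M i j) ^ 2 = 1}

/-- The cross-entropy risk `f(W,H) = (1/N) ∑_k ∑_i L_CE(τ Wᵀ h_{k,i}, k)` with `N = K n`. -/
noncomputable def ceRisk {d K n : ℕ} (τ : ℝ) (W : Matrix (Fin d) (Fin K) ℝ)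
    (H : Matrix (Fin d) (Fin K × Fin n) ℝ) : ℝ :=
  (1 / ((K : ℝ) * n)) * ∑ k : Fin K, ∑ i : Fin n,
    LCE (fun ℓ => τ * ∑ r, W r ℓ * H r (k, i)) k

/-- The softmax map `η(z)_j = exp(z_j) / ∑_ℓ exp(z_ℓ)`. -/
noncomputable def softmax {K : ℕ} (z : Fin K → ℝ) (j : Fin K) : ℝ :=
  Real.exp (z j) / ∑ ℓ, Real.exp (z ℓ)

/-- The logits `m_j = τ Wᵀ h_j` for the column `j = (k,i)` of `H`. -/
noncomputable def logits {d K n : ℕ} (τ : ℝ) (W : Matrix (Fin d) (Fin K) ℝ)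
    (H : Matrix (Fin d) (Fin K × Fin n) ℝ) (j : Fin K × Fin n) : Fin K → ℝ :=
  fun ℓ => τ * ∑ r, W r ℓ * H r j

/-- The gradient matrix `G`: its column indexed by `(k,i)` is `(1/N)(η(τ Wᵀ h_{k,i}) − e_k)`. -/
noncomputable def Gmat {d K n : ℕ} (τ : ℝ) (W : Matrix (Fin d) (Fin K) ℝ)
    (H : Matrix (Fin d) (Fin K × Fin n) ℝ) : Matrix (Fin K) (Fin K × Fin n) ℝ :=
  fun ℓ j => (1 / ((K : ℝ) * n)) * (softmax (logits τ W H j) ℓ - if ℓ = j.1 then 1 else 0)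

/-- `ddiag A` is the diagonal matrix with the same diagonal as `A`. -/
def ddiag {ι : Type} [Fintype ι] [DecidableEq ι] (A : Matrix ι ι ℝ) : Matrix ι ι ℝ :=
  Matrix.diagonal fun i => A i i

/-- `(W,H)` is a Riemannian critical point of `f` if
`H Gᵀ = W ddiag(Wᵀ H Gᵀ)` and `W G = H ddiag(Hᵀ W G)`. -/
noncomputable def IsCriticalPoint {d K n : ℕ} (τ : ℝ) (W : Matrix (Fin d) (Fin K) ℝ)
    (H : Matrix (Fin d) (Fin K × Fin n) ℝ) : Prop :=
  H * (Gmat τ W H)ᵀ = W * ddiag (Wᵀ * (H * (Gmat τ W H)ᵀ)) ∧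
  W * Gmat τ W H = H * ddiag (Hᵀ * (W * Gmat τ W H))

/-- `α_k = ⟨w_k, H gᵏ⟩` where `gᵏ` is the `k`-th row of `G`. -/
noncomputable def alphaCoef {d K n : ℕ} (τ : ℝ) (W : Matrix (Fin d) (Fin K) ℝ)
    (H : Matrix (Fin d) (Fin K × Fin n) ℝ) (k : Fin K) : ℝ :=
  ∑ r, W r k * ∑ j, H r j * Gmat τ W H k j

/-- `β_j = ⟨h_j, W g_j⟩` where `g_j` is the `j`-th column of `G`. -/
noncomputable def betaCoef {d K n : ℕ} (τ : ℝ) (W : Matrix (Fin d) (Fin K) ℝ)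
    (H : Matrix (Fin d) (Fin K × Fin n) ℝ) (j : Fin K × Fin n) : ℝ :=
  ∑ r, H r j * ∑ ℓ, W r ℓ * Gmat τ W H ℓ j

/-- `ε_j`: the `j`-th column of `τ (Wᵀ Δ_H + Δ_Wᵀ H)`. -/
noncomputable def epsCol {d K n : ℕ} (τ : ℝ) (W ΔW : Matrix (Fin d) (Fin K) ℝ)
    (H ΔH : Matrix (Fin d) (Fin K × Fin n) ℝ) (j : Fin K × Fin n) (ℓ : Fin K) : ℝ :=
  τ * ((∑ r, W r ℓ * ΔH r j) + ∑ r, ΔW r ℓ * H r j)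

/-- The Riemannian Hessian quadratic form `Hess f(W,H)[Δ,Δ]`. -/
noncomputable def hessForm {d K n : ℕ} (τ : ℝ) (W ΔW : Matrix (Fin d) (Fin K) ℝ)
    (H ΔH : Matrix (Fin d) (Fin K × Fin n) ℝ) : ℝ :=
  (1 / ((K : ℝ) * n)) * (∑ j : Fin K × Fin n,
      ((∑ ℓ, softmax (logits τ W H j) ℓ * (epsCol τ W ΔW H ΔH j ℓ) ^ 2)
        - (∑ ℓ, softmax (logits τ W H j) ℓ * epsCol τ W ΔW H ΔH j ℓ) ^ 2))
    + 2 * τ * ∑ ℓ : Fin K, ∑ j : Fin K × Fin n, Gmat τ W H ℓ j * (∑ r, ΔW r ℓ * ΔH r j)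
    - τ * ∑ k : Fin K, alphaCoef τ W H k * ∑ r, (ΔW r k) ^ 2
    - τ * ∑ j : Fin K × Fin n, betaCoef τ W H j * ∑ r, (ΔH r j) ^ 2

/-! ### Softmax and convexity of the cross-entropy loss -/

lemma softmax_pos {K : ℕ} (z : Fin K → ℝ) (j : Fin K) : 0 < softmax z j :=
  div_pos (Real.exp_pos _)
    (Finset.sum_pos (fun _ _ => Real.exp_pos _) ⟨j, Finset.mem_univ j⟩)

lemma sum_softmax {K : ℕ} (z : Fin K → ℝ) (k : Fin K) : ∑ j, softmax z j = 1 := by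
  have h : 0 < ∑ ℓ, Real.exp (z ℓ) :=
    Finset.sum_pos (fun _ _ => Real.exp_pos _) ⟨k, Finset.mem_univ k⟩
  simp only [softmax]
  rw [← Finset.sum_div, div_self h.ne']

/-- Gradient inequality for the convex function `z ↦ L_CE(z, k)`, whose gradient is `η(z) - e_k`. -/
lemma LCE_gradient_ineq {K : ℕ} (z z' : Fin K → ℝ) (k : Fin K) :
    LCE z k + ∑ ℓ, (softmax z ℓ - if ℓ = k then 1 else 0) * (z' ℓ - z ℓ) ≤ LCE z' k := by
  have h : 0 < ∑ ℓ, Real.exp (z ℓ) :=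
    Finset.sum_pos (fun _ _ => Real.exp_pos _) ⟨k, Finset.mem_univ k⟩
  have h' : 0 < ∑ ℓ, Real.exp (z' ℓ) :=
    Finset.sum_pos (fun _ _ => Real.exp_pos _) ⟨k, Finset.mem_univ k⟩
  -- Jensen's inequality for `exp` with weights `softmax z`.
  have key := convexOn_exp.map_sum_le (t := Finset.univ) (w := softmax z)
    (p := fun ℓ => z' ℓ - z ℓ) (fun i _ => (softmax_pos z i).le) (sum_softmax z k)
    (fun _ _ => Set.mem_univ _)
  simp only [smul_eq_mul] at key
  have e : ∑ ℓ, softmax z ℓ * Real.exp (z' ℓ - z ℓ)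
      = (∑ ℓ, Real.exp (z' ℓ)) / ∑ ℓ, Real.exp (z ℓ) := by
    rw [Finset.sum_div]
    refine Finset.sum_congr rfl fun ℓ _ => ?_
    rw [softmax, Real.exp_sub]
    field_simp
  rw [e] at key
  have key2 := (Real.le_log_iff_exp_le (div_pos h' h)).2 key
  rw [Real.log_div h'.ne' h.ne'] at key2
  have e2 : ∑ ℓ, (softmax z ℓ - if ℓ = k then 1 else 0) * (z' ℓ - z ℓ)
      = ∑ ℓ, softmax z ℓ * (z' ℓ - z ℓ) - (z' k - z k) := by
    simp [sub_mul, Finset.sum_sub_distrib]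
  rw [e2, LCE, LCE]
  linarith

/-! ### Linear algebra: the simplex frame and orthogonal vectors -/

/-- The simplex equiangular tight frame: `K ≤ d` unit vectors with pairwise inner products
`-1/(K-1)`, realised as rescaled projections of the standard basis of `ℝ^K` onto `1^⊥`. -/
lemma exists_simplex_ETF (d K : ℕ) (hK : 2 ≤ K) (hdK : K ≤ d) :
    ∃ V : Matrix (Fin d) (Fin K) ℝ, ∀ k l, ∑ r, V r k * V r l
      = if k = l then (1 : ℝ) else -1 / ((K : ℝ) - 1) := by
  obtain ⟨m, rfl⟩ := Nat.exists_eq_add_of_le hdK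
  have hK' : (2 : ℝ) ≤ K := by exact_mod_cast hK
  have hK1 : (0 : ℝ) < K - 1 := by linarith
  have hK0 : (0 : ℝ) < K := by linarith
  refine ⟨fun r k => √(K / (K - 1)) *
    Fin.append (fun i : Fin K => (if i = k then (1 : ℝ) else 0) - 1 / K) (fun _ : Fin m => 0) r,
    fun k l => ?_⟩
  rw [Fin.sum_univ_add]
  simp only [Fin.append_left, Fin.append_right, mul_zero, Finset.sum_const_zero, add_zero]
  have hs : √((K : ℝ) / (K - 1)) * √((K : ℝ) / (K - 1)) = K / (K - 1) :=
    Real.mul_self_sqrt (by positivity)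
  have e : ∀ i : Fin K, √((K : ℝ) / (K - 1)) * ((if i = k then (1 : ℝ) else 0) - 1 / K) *
      (√((K : ℝ) / (K - 1)) * ((if i = l then (1 : ℝ) else 0) - 1 / K))
      = (K / (K - 1)) * ((if i = k then (if i = l then (1 : ℝ) else 0) else 0)
        - (if i = k then (1 : ℝ) else 0) * (1 / K) - (if i = l then (1 : ℝ) else 0) * (1 / K)
        + 1 / K * (1 / K)) := by
    intro i
    rw [mul_mul_mul_comm, hs]
    split_ifs <;> ring
  simp only [e]
  rw [← Finset.mul_sum]
  simp only [Finset.sum_add_distrib, Finset.sum_sub_distrib, ← Finset.sum_mul,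
    Finset.sum_ite_eq', Finset.mem_univ, if_true, Finset.sum_const, Finset.card_univ,
    Fintype.card_fin, nsmul_eq_mul]
  split_ifs
  · field_simp
    ring
  · field_simp
    ring

lemma exists_orthogonal {ι : Type} [Fintype ι] {d : ℕ} (h : Fintype.card ι < d)
    (A : ι → Fin d → ℝ) : ∃ a : Fin d → ℝ, 0 < ∑ r, a r ^ 2 ∧ ∀ i, ∑ r, A i r * a r = 0 := by
  have hk : LinearMap.ker (Matrix.mulVecLin (Matrix.of A)) ≠ ⊥ :=
    LinearMap.ker_ne_bot_of_finrank_lt (by simpa using h)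
  obtain ⟨a, ha, hne⟩ := (Submodule.ne_bot_iff _).1 hk
  refine ⟨a, ?_, fun i => ?_⟩
  · obtain ⟨r, hr⟩ := Function.ne_iff.1 hne
    exact Finset.sum_pos' (fun i _ => sq_nonneg _)
      ⟨r, Finset.mem_univ r, sq_pos_of_ne_zero hr⟩
  · exact congrFun (LinearMap.mem_ker.1 ha) i

/-! ### Multipliers and the certificate of global optimality -/

section

variable {d K n : ℕ} {τ : ℝ} {W : Matrix (Fin d) (Fin K) ℝ}
  {H : Matrix (Fin d) (Fin K × Fin n) ℝ}

lemma sum_alphaCoef : ∑ k, alphaCoef τ W H k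
    = ∑ ℓ, ∑ j, Gmat τ W H ℓ j * ∑ r, W r ℓ * H r j := by
  refine Finset.sum_congr rfl fun k _ => ?_
  simp only [alphaCoef, Finset.mul_sum]
  rw [Finset.sum_comm]
  exact Finset.sum_congr rfl fun _ _ => Finset.sum_congr rfl fun _ _ => by ring

lemma sum_betaCoef : ∑ j, betaCoef τ W H j
    = ∑ ℓ, ∑ j, Gmat τ W H ℓ j * ∑ r, W r ℓ * H r j := by
  rw [Finset.sum_comm]
  refine Finset.sum_congr rfl fun k _ => ?_
  simp only [betaCoef, Finset.mul_sum]
  rw [Finset.sum_comm]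
  exact Finset.sum_congr rfl fun _ _ => Finset.sum_congr rfl fun _ _ => by ring

lemma IsCriticalPoint.W_mul_G (h : IsCriticalPoint τ W H) (r : Fin d) (j : Fin K × Fin n) :
    ∑ ℓ, W r ℓ * Gmat τ W H ℓ j = H r j * betaCoef τ W H j := by
  have := congrFun (congrFun h.2 r) j
  rw [ddiag, Matrix.mul_diagonal] at this
  simpa only [betaCoef, Matrix.mul_apply, Matrix.transpose_apply] using this

lemma ceRisk_eq : ceRisk τ W H = (1 / ((K : ℝ) * n)) * ∑ j, LCE (logits τ W H j) j.1 := by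
  rw [ceRisk, Fintype.sum_prod_type]
  rfl

lemma ceRisk_gradient_ineq (W' : Matrix (Fin d) (Fin K) ℝ)
    (H' : Matrix (Fin d) (Fin K × Fin n) ℝ) :
    ceRisk τ W H + ∑ ℓ, ∑ j, Gmat τ W H ℓ j * (logits τ W' H' j ℓ - logits τ W H j ℓ)
      ≤ ceRisk τ W' H' := by
  rw [ceRisk_eq, ceRisk_eq, Finset.sum_comm]
  simp only [Gmat, mul_assoc, ← Finset.mul_sum]
  rw [← mul_add, ← Finset.sum_add_distrib]
  exact mul_le_mul_of_nonneg_left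
    (Finset.sum_le_sum fun j _ => LCE_gradient_ineq _ _ _) (by positivity)

/-- Certificate of global optimality: if the form `2 xᵀ G y - ∑ α_k x_k² - ∑ β_j y_j²` is positive
semidefinite, then `(W, H)` minimises the risk over the product of oblique manifolds. -/
lemma ceRisk_le_of_form_nonneg (hτ : 0 < τ)
    (hQ : ∀ (x : Fin K → ℝ) (y : Fin K × Fin n → ℝ),
      0 ≤ 2 * ∑ ℓ, ∑ j, Gmat τ W H ℓ j * (x ℓ * y j) - ∑ k, alphaCoef τ W H k * x k ^ 2
        - ∑ j, betaCoef τ W H j * y j ^ 2)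
    {W' : Matrix (Fin d) (Fin K) ℝ} {H' : Matrix (Fin d) (Fin K × Fin n) ℝ}
    (hW' : W' ∈ OB d (Fin K)) (hH' : H' ∈ OB d (Fin K × Fin n)) :
    ceRisk τ W H ≤ ceRisk τ W' H' := by
  have hsum := Finset.sum_nonneg fun r (_ : r ∈ Finset.univ) => hQ (W' r) (H' r)
  have e1 : ∑ r, ∑ ℓ, ∑ j, Gmat τ W H ℓ j * (W' r ℓ * H' r j)
      = ∑ ℓ, ∑ j, Gmat τ W H ℓ j * ∑ r, W' r ℓ * H' r j := by
    rw [Finset.sum_comm]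
    refine Finset.sum_congr rfl fun ℓ _ => ?_
    rw [Finset.sum_comm]
    exact Finset.sum_congr rfl fun j _ => (Finset.mul_sum _ _ _).symm
  have e2 : ∑ r, ∑ k, alphaCoef τ W H k * W' r k ^ 2 = ∑ k, alphaCoef τ W H k := by
    rw [Finset.sum_comm]
    refine Finset.sum_congr rfl fun k _ => ?_
    rw [← Finset.mul_sum, hW' k, mul_one]
  have e3 : ∑ r, ∑ k, betaCoef τ W H k * H' r k ^ 2 = ∑ k, betaCoef τ W H k := by
    rw [Finset.sum_comm]
    refine Finset.sum_congr rfl fun k _ => ?_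
    rw [← Finset.mul_sum, hH' k, mul_one]
  rw [Finset.sum_sub_distrib, Finset.sum_sub_distrib, ← Finset.mul_sum, e1, e2, e3,
    sum_alphaCoef, sum_betaCoef] at hsum
  have hg := ceRisk_gradient_ineq (τ := τ) (W := W) (H := H) W' H'
  have e4 : ∑ ℓ, ∑ j, Gmat τ W H ℓ j * (logits τ W' H' j ℓ - logits τ W H j ℓ)
      = τ * (∑ ℓ, ∑ j, Gmat τ W H ℓ j * (∑ r, W' r ℓ * H' r j)
        - ∑ ℓ, ∑ j, Gmat τ W H ℓ j * ∑ r, W r ℓ * H r j) := by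
    rw [← Finset.sum_sub_distrib, Finset.mul_sum]
    refine Finset.sum_congr rfl fun ℓ _ => ?_
    rw [← Finset.sum_sub_distrib, Finset.mul_sum]
    refine Finset.sum_congr rfl fun j _ => ?_
    simp only [logits]
    ring
  rw [e4] at hg
  nlinarith [mul_nonneg hτ.le (show (0:ℝ) ≤
    ∑ ℓ, ∑ j, Gmat τ W H ℓ j * (∑ r, W' r ℓ * H' r j)
        - ∑ ℓ, ∑ j, Gmat τ W H ℓ j * ∑ r, W r ℓ * H r j by linarith)]

/-! ### The Hessian along rank-one directions -/

/-- The Hessian along `Δ_W = a xᵀ`, `Δ_H = a yᵀ`, where `a` is orthogonal to all columns of `W`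
and `H`. -/
lemma hessForm_rankOne (a : Fin d → ℝ) (haW : ∀ k, ∑ r, W r k * a r = 0)
    (haH : ∀ j, ∑ r, H r j * a r = 0) (x : Fin K → ℝ) (y : Fin K × Fin n → ℝ) :
    hessForm τ W (fun r k => a r * x k) H (fun r j => a r * y j)
      = τ * (∑ r, a r ^ 2) * (2 * ∑ ℓ, ∑ j, Gmat τ W H ℓ j * (x ℓ * y j)
        - ∑ k, alphaCoef τ W H k * x k ^ 2 - ∑ j, betaCoef τ W H j * y j ^ 2) := by
  have heps : ∀ j ℓ, epsCol τ W (fun r k => a r * x k) H (fun r j => a r * y j) j ℓ = 0 := by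
    intro j ℓ
    have e1 : ∑ r, W r ℓ * (a r * y j) = 0 := by
      simp only [← mul_assoc, ← Finset.sum_mul, haW, zero_mul]
    have e2 : ∑ r, a r * x ℓ * H r j = 0 := by
      rw [← mul_zero (x ℓ), ← haH j, Finset.mul_sum]
      exact Finset.sum_congr rfl fun _ _ => by ring
    simp only [epsCol, e1, e2, add_zero, mul_zero]
  have e1 : ∀ ℓ j, ∑ r, a r * x ℓ * (a r * y j) = (∑ r, a r ^ 2) * (x ℓ * y j) := by
    intro ℓ j
    rw [Finset.sum_mul]
    exact Finset.sum_congr rfl fun _ _ => by ring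
  have e2 : ∀ s : ℝ, ∑ r, (a r * s) ^ 2 = (∑ r, a r ^ 2) * s ^ 2 := by
    intro s
    rw [Finset.sum_mul]
    exact Finset.sum_congr rfl fun _ _ => by ring
  simp only [hessForm, heps, e1, e2]
  generalize ∑ r, a r ^ 2 = A
  have f1 : ∑ ℓ, ∑ j, Gmat τ W H ℓ j * (A * (x ℓ * y j))
      = A * ∑ ℓ, ∑ j, Gmat τ W H ℓ j * (x ℓ * y j) := by
    simp only [Finset.mul_sum, mul_left_comm]
  have f2 : ∑ k, alphaCoef τ W H k * (A * x k ^ 2) = A * ∑ k, alphaCoef τ W H k * x k ^ 2 := by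
    simp only [Finset.mul_sum, mul_left_comm]
  have f3 : ∑ k, betaCoef τ W H k * (A * y k ^ 2) = A * ∑ k, betaCoef τ W H k * y k ^ 2 := by
    simp only [Finset.mul_sum, mul_left_comm]
  rw [f1, f2, f3]
  simp only [ne_eq, OfNat.ofNat_ne_zero, not_false_eq_true, zero_pow, mul_zero,
    Finset.sum_const_zero, sub_zero]
  ring

/-- If `β_j = 0`, then `w_k` (with `k` the class of `j`) is a convex combination with positive
weights of the unit vectors `w_ℓ`, so all of them coincide. -/
lemma columns_eq_of_betaCoef_eq_zero (hW : W ∈ OB d (Fin K)) (hcrit : IsCriticalPoint τ W H)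
    {j : Fin K × Fin n} (hj : betaCoef τ W H j = 0) (r : Fin d) (ℓ : Fin K) :
    W r ℓ = W r j.1 := by
  have hK : (K : ℝ) ≠ 0 := by
    have := j.1.pos
    positivity
  have hn : (n : ℝ) ≠ 0 := by
    have := j.2.pos
    positivity
  have hbar : ∀ r, ∑ ℓ, softmax (logits τ W H j) ℓ * W r ℓ = W r j.1 := by
    intro r
    have h := hcrit.W_mul_G r j
    rw [hj, mul_zero] at h
    have e : ∑ ℓ, W r ℓ * Gmat τ W H ℓ j = (1 / ((K : ℝ) * n)) *
        (∑ ℓ, softmax (logits τ W H j) ℓ * W r ℓ - W r j.1) := by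
      have : W r j.1 = ∑ ℓ, (if ℓ = j.1 then 1 else 0) * W r ℓ := by simp
      rw [this, ← Finset.sum_sub_distrib, Finset.mul_sum]
      refine Finset.sum_congr rfl fun ℓ _ => ?_
      simp only [Gmat]
      ring
    rw [e] at h
    have := (mul_eq_zero.1 h).resolve_left (by positivity)
    linarith
  -- `∑ η_ℓ ‖w_ℓ - w_k‖² = 0`, expanded using `‖w_ℓ‖ = ‖w_k‖ = 1` and `∑ η_ℓ w_ℓ = w_k`.
  have hz : ∑ ℓ, softmax (logits τ W H j) ℓ * ∑ r, (W r ℓ - W r j.1) ^ 2 = 0 := by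
    have e : ∀ ℓ, ∑ r, (W r ℓ - W r j.1) ^ 2 = 2 - 2 * ∑ r, W r ℓ * W r j.1 := by
      intro ℓ
      have h1 := hW ℓ
      have h2 := hW j.1
      have : ∑ r, (W r ℓ - W r j.1) ^ 2
          = ∑ r, W r ℓ ^ 2 + ∑ r, W r j.1 ^ 2 - 2 * ∑ r, W r ℓ * W r j.1 := by
        rw [Finset.mul_sum, ← Finset.sum_add_distrib, ← Finset.sum_sub_distrib]
        exact Finset.sum_congr rfl fun _ _ => by ring
      rw [this, h1, h2]
      ring
    have e' : ∑ ℓ, softmax (logits τ W H j) ℓ * ∑ r, W r ℓ * W r j.1 = 1 := by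
      rw [← hW j.1]
      simp only [Finset.mul_sum]
      rw [Finset.sum_comm]
      refine Finset.sum_congr rfl fun r _ => ?_
      simp only [← mul_assoc]
      rw [← Finset.sum_mul, hbar r, sq]
    simp only [e, mul_sub, Finset.sum_sub_distrib, ← Finset.sum_mul, sum_softmax _ j.1]
    simp only [mul_left_comm _ (2 : ℝ), ← Finset.mul_sum, e']
    norm_num
  have h1 := (Finset.sum_eq_zero_iff_of_nonneg fun ℓ _ => mul_nonneg (softmax_pos _ ℓ).le
    (Finset.sum_nonneg fun r _ => sq_nonneg _)).1 hz ℓ (Finset.mem_univ _)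
  have h2 := (mul_eq_zero.1 h1).resolve_left (softmax_pos _ ℓ).ne'
  have h3 := (Finset.sum_eq_zero_iff_of_nonneg fun r _ => sq_nonneg _).1 h2 r (Finset.mem_univ _)
  exact sub_eq_zero.1 (pow_eq_zero_iff (by norm_num) |>.1 h3)

/-- For `Δ_H = t v e_jᵀ` with `v` orthogonal to the columns of `W` and `β_j = 0`, the Hessian is
affine in `t`. -/
lemma hessForm_affine {j : Fin K × Fin n} (hj : betaCoef τ W H j = 0) (v : Fin d → ℝ)
    (hvW : ∀ k, ∑ r, W r k * v r = 0) (t : ℝ) :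
    hessForm τ W (fun r k => if k = j.1 then v r else 0) H (fun r i => if i = j then t * v r else 0)
      = hessForm τ W (fun r k => if k = j.1 then v r else 0) H 0
        + t * (2 * τ * (Gmat τ W H j.1 j * ∑ r, v r ^ 2)) := by
  have heps : ∀ i ℓ, epsCol τ W (fun r k => if k = j.1 then v r else 0) H
      (fun r i => if i = j then t * v r else 0) i ℓ
      = epsCol τ W (fun r k => if k = j.1 then v r else 0) H 0 i ℓ := by
    intro i ℓ
    have e : ∑ r, W r ℓ * (if i = j then t * v r else 0) = 0 := by
      split_ifs
      · simp only [mul_left_comm _ t, ← Finset.mul_sum, hvW, mul_zero]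
      · simp
    simp only [epsCol, e, Matrix.zero_apply, mul_zero, Finset.sum_const_zero]
  have e1 : ∑ ℓ, ∑ i, Gmat τ W H ℓ i *
      (∑ r, (if ℓ = j.1 then v r else 0) * (if i = j then t * v r else 0))
      = t * (Gmat τ W H j.1 j * ∑ r, v r ^ 2) := by
    rw [Finset.sum_eq_single j.1, Finset.sum_eq_single j]
    · simp only [if_true, Finset.mul_sum]
      exact Finset.sum_congr rfl fun _ _ => by ring
    · intro i _ hi
      simp [hi]
    · simp
    · intro ℓ _ hℓ
      simp [hℓ]
    · simp
  have e2 : ∑ i, betaCoef τ W H i * ∑ r, (if i = j then t * v r else 0) ^ 2 = 0 := by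
    refine Finset.sum_eq_zero fun i _ => ?_
    by_cases hi : i = j
    · rw [hi, hj, zero_mul]
    · simp [hi]
  simp only [hessForm, heps, e1, e2, Matrix.zero_apply]
  simp only [ne_eq, OfNat.ofNat_ne_zero, not_false_eq_true, zero_pow, mul_zero,
    Finset.sum_const_zero, sub_zero]
  ring

end

/-! ### Value at the simplex frame, and the negative direction -/

/-- The value of the risk at a simplex equiangular tight frame with `h_{k,i} = w_k`. -/
lemma ceRisk_ETF {d K n : ℕ} (hK : 2 ≤ K) (hn : 1 ≤ n) (τ : ℝ) (V : Matrix (Fin d) (Fin K) ℝ)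
    (hV : ∀ k l, ∑ r, V r k * V r l = if k = l then (1 : ℝ) else -1 / ((K : ℝ) - 1)) :
    ceRisk τ V (fun r (j : Fin K × Fin n) => V r j.1)
      = Real.log (1 + ((K : ℝ) - 1) * Real.exp (-((K : ℝ) * τ) / ((K : ℝ) - 1))) := by
  have hK' : (2 : ℝ) ≤ K := by exact_mod_cast hK
  have hK1 : (0 : ℝ) < K - 1 := by linarith
  have hn' : (0 : ℝ) < n := by exact_mod_cast hn
  have hL : ∀ k : Fin K, LCE (fun ℓ => τ * ∑ r, V r ℓ * V r k) k
      = Real.log (1 + ((K : ℝ) - 1) * Real.exp (-((K : ℝ) * τ) / ((K : ℝ) - 1))) := by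
    intro k
    have e : ∀ ℓ, Real.exp (τ * ∑ r, V r ℓ * V r k) = Real.exp (τ * (-1 / ((K : ℝ) - 1)))
        + if ℓ = k then Real.exp τ - Real.exp (τ * (-1 / ((K : ℝ) - 1))) else 0 := by
      intro ℓ
      rw [hV]
      split_ifs <;> simp
    have e2 : Real.exp (τ * (-1 / ((K : ℝ) - 1)))
        = Real.exp τ * Real.exp (-((K : ℝ) * τ) / ((K : ℝ) - 1)) := by
      rw [← Real.exp_add]
      congr 1
      field_simp
      ring
    have e3 : (∑ ℓ, Real.exp (τ * ∑ r, V r ℓ * V r k))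
        = Real.exp τ * (1 + ((K : ℝ) - 1) * Real.exp (-((K : ℝ) * τ) / ((K : ℝ) - 1))) := by
      simp only [e, Finset.sum_add_distrib, Finset.sum_ite_eq', Finset.mem_univ, if_true,
        Finset.sum_const, Finset.card_univ, Fintype.card_fin, nsmul_eq_mul]
      rw [e2]
      ring
    rw [LCE, e3, Real.log_mul (Real.exp_pos _).ne' (by positivity), Real.log_exp, hV k k,
      if_pos rfl]
    ring
  simp only [ceRisk, hL, Finset.sum_const, Finset.card_univ, Fintype.card_fin, nsmul_eq_mul]
  field_simp

theorem nonglobal_critical_point_has_negative_curvature (d K n : ℕ) (hK : 2 ≤ K) (hdK : K < d)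
    (hn : 1 ≤ n) (τ : ℝ) (hτ : 0 < τ)
    (hτ' : τ < 2 * ((d : ℝ) - 2) / (1 + ((K % 2 : ℕ) : ℝ) / (K : ℝ)))
    (W : Matrix (Fin d) (Fin K) ℝ) (H : Matrix (Fin d) (Fin K × Fin n) ℝ)
    (hW : W ∈ OB d (Fin K)) (hH : H ∈ OB d (Fin K × Fin n))
    (hcrit : IsCriticalPoint τ W H)
    (hnotglobal : Real.log (1 + ((K : ℝ) - 1) * Real.exp (-((K : ℝ) * τ) / ((K : ℝ) - 1)))
      < ceRisk τ W H) :
    ∃ (ΔW : Matrix (Fin d) (Fin K) ℝ) (ΔH : Matrix (Fin d) (Fin K × Fin n) ℝ),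
      (∀ k : Fin K, ∑ r, W r k * ΔW r k = 0) ∧
      (∀ j : Fin K × Fin n, ∑ r, H r j * ΔH r j = 0) ∧
      hessForm τ W ΔW H ΔH < 0 := by
  by_cases hβ : ∃ j, betaCoef τ W H j = 0
  · obtain ⟨j, hj⟩ := hβ
    have hcol := columns_eq_of_betaCoef_eq_zero hW hcrit hj
    obtain ⟨v, hv, hort⟩ := exists_orthogonal (ι := Fin 2) (d := d) (by simp; omega)
      ![fun r => W r j.1, fun r => H r j]
    have hvw : ∑ r, W r j.1 * v r = 0 := hort 0
    have hvh : ∑ r, H r j * v r = 0 := hort 1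
    have hvW : ∀ k, ∑ r, W r k * v r = 0 := by
      intro k
      simpa only [hcol _ k] using hvw
    -- `G_{kj} = (η_k - 1) / N` is nonzero, as softmax weights are positive and `K ≥ 2`.
    have hG : Gmat τ W H j.1 j ≠ 0 := by
      have hKn : (1 / ((K : ℝ) * n)) ≠ 0 := by
        have : 0 < K := by omega
        positivity
      have : Nontrivial (Fin K) := Fin.nontrivial_iff_two_le.2 hK
      obtain ⟨l, hl⟩ := exists_ne j.1
      have h1 := Finset.add_le_sum (f := softmax (logits τ W H j)) (s := Finset.univ)
        (fun i _ => (softmax_pos _ i).le) (Finset.mem_univ l) (Finset.mem_univ j.1) hl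
      rw [sum_softmax _ j.1] at h1
      have h2 := softmax_pos (logits τ W H j) l
      simp only [Gmat, if_true]
      exact mul_ne_zero hKn (by linarith)
    have hc : 2 * τ * (Gmat τ W H j.1 j * ∑ r, v r ^ 2) ≠ 0 :=
      mul_ne_zero (by positivity) (mul_ne_zero hG hv.ne')
    refine ⟨fun r k => if k = j.1 then v r else 0,
      fun r i => if i = j then
        ((-1 - hessForm τ W (fun r k => if k = j.1 then v r else 0) H 0)
          / (2 * τ * (Gmat τ W H j.1 j * ∑ r, v r ^ 2))) * v r else 0, ?_, ?_, ?_⟩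
    · intro k
      beta_reduce
      split_ifs
      · exact hvW k
      · simp
    · intro i
      beta_reduce
      split_ifs with hi
      · simp only [hi, mul_left_comm (H _ j), ← Finset.mul_sum, hvh, mul_zero]
      · simp
    · rw [hessForm_affine hj v hvW, div_mul_cancel₀ _ hc]
      linarith
  · push Not at hβ
    obtain ⟨a, ha, haW⟩ := exists_orthogonal (ι := Fin K) (d := d) (by simpa using hdK)
      (fun k r => W r k)
    -- Each `h_j = β_j⁻¹ W g_j` lies in the column space of `W`.
    have haH : ∀ j, ∑ r, H r j * a r = 0 := by
      intro j
      have h0 : betaCoef τ W H j * ∑ r, H r j * a r = 0 := by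
        have e : ∀ r, betaCoef τ W H j * (H r j * a r)
            = ∑ ℓ, Gmat τ W H ℓ j * (W r ℓ * a r) := by
          intro r
          rw [← mul_assoc, mul_comm (betaCoef τ W H j), ← hcrit.W_mul_G r j, Finset.sum_mul]
          exact Finset.sum_congr rfl fun _ _ => by ring
        rw [Finset.mul_sum]
        simp only [e]
        rw [Finset.sum_comm]
        simp only [← Finset.mul_sum, haW, mul_zero, Finset.sum_const_zero]
      exact (mul_eq_zero.1 h0).resolve_left (hβ j)
    by_contra hcon
    push Not at hcon
    obtain ⟨V, hV⟩ := exists_simplex_ETF d K hK hdK.le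
    have hVO : ∀ k, ∑ r, V r k ^ 2 = 1 := fun k => by
      simpa only [sq, if_true] using hV k k
    have hle : ceRisk τ W H ≤ ceRisk τ V (fun r (j : Fin K × Fin n) => V r j.1) := by
      refine ceRisk_le_of_form_nonneg hτ (fun x y => ?_) hVO (fun j => hVO j.1)
      have h := hcon (fun r k => a r * x k) (fun r j => a r * y j)
        (fun k => by simp only [← mul_assoc, ← Finset.sum_mul, haW, zero_mul])
        (fun j => by simp only [← mul_assoc, ← Finset.sum_mul, haH, zero_mul])
      rw [hessForm_rankOne a haW haH] at h
      exact nonneg_of_mul_nonneg_right h (mul_pos hτ ha)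
    rw [ceRisk_ETF hK hn τ V hV] at hle
    exact absurd hnotglobal (not_lt.2 hle)
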